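/- Let n ≥ 1, let K be a real n×n matrix, and let I ⊆ {1,…,n} with m = |I|. In the exterior algebra Λ(ℝ^{2n+2}) with ψ_i = ι(e_i), ψ̄_i = ι(e_{n+i}), α = ι(e_{2n+1}), β = ι(e_{2n+2}) and S = Σ_{i,j} K_{ij} ψ̄_i ∧ ψ_j − Σ_i α ∧ ψ_i − Σ_i ψ̄_i ∧ β, one has S^{n−m+1} ∧ (∧_{i∈I} (ψ̄_i ∧ ψ_i)) = −(n−m+1)! · |adj(K_{Iᶜ})| · Ω ∧ α ∧ β, where K_{Iᶜ} is the principal submatrix of K with rows and columns in the complement of I, |adj(K_{Iᶜ})| is the sum of all entries of its adjugate, and Ω = ψ̄_1 ∧ ψ_1 ∧ ⋯ ∧ ψ̄_n ∧ ψ_n. -/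

import Mathlib

open ExteriorAlgebra

/-!
Products `x ∧ y` of two vectors are central in the exterior algebra, so the computation takes place
in a commutative ring. Adjoining `α` as an extra `ψ̄` and `β` as an extra `ψ` absorbs the source
terms into a quadratic form `∑ A a b • x a ∧ y b` whose matrix `A` is `K` bordered by `-1`s, with
corner `0`. The insertions annihilate the rows and columns of `A` indexed by `I`. The remaining form
is a sum of commuting square-zero elements `x a ∧ ∑ b, A a b • y b`, so its top power is a factorial
times their product; that product is alternating in its second factors, hence equal to
`det A • ∏ x a ∧ y a`. Finally, the bordered determinant is minus the sum of the entries of the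
adjugate of `K` restricted to the complement of `I`.
-/

section SquareZero

variable {R T : Type*} [CommSemiring R]

theorem sum_pow_card_of_mul_self_eq_zero {z : T → R} {s : Finset T} (hz : ∀ a ∈ s, z a * z a = 0) :
    (∑ a ∈ s, z a) ^ s.card = s.card.factorial * ∏ a ∈ s, z a := by
  classical
  rw [Finset.sum_pow_eq_sum_piAntidiag, Finset.sum_eq_single fun a => if a ∈ s then 1 else 0]
  · have hpow : ∀ a ∈ s, z a ^ (if a ∈ s then 1 else 0) = z a := fun a ha => by simp [ha]
    have hmultinomial : Nat.multinomial s (fun a => if a ∈ s then 1 else 0) = s.card.factorial := by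
      rw [Nat.multinomial_congr (g := fun _ => 1) fun a ha => if_pos ha]
      simp [Nat.multinomial]
    rw [Finset.prod_congr rfl hpow, hmultinomial]
  · intro k hk hne
    obtain ⟨hsum, hsupp⟩ := Finset.mem_piAntidiag.1 hk
    obtain ⟨a, ha, hka⟩ : ∃ a ∈ s, 2 ≤ k a := by
      by_contra! hlt
      have hle : ∀ a ∈ s, k a ≤ 1 := fun a ha => Nat.le_of_lt_succ (hlt a ha)
      have hone : ∀ a ∈ s, k a = 1 :=
        (Finset.sum_eq_sum_iff_of_le hle).1 (by simpa using hsum)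
      refine hne (funext fun a => ?_)
      split_ifs with ha
      · exact hone a ha
      · exact not_not.1 (mt (hsupp a) ha)
    have hpow : z a ^ k a = 0 := pow_eq_zero_of_le hka (by rw [pow_two, hz a ha])
    rw [Finset.prod_eq_zero ha hpow, mul_zero]
  · intro hnotMem
    exact absurd (Finset.mem_piAntidiag.2 ⟨by simp, by simp⟩) hnotMem

end SquareZero

section AlternatingMap

variable {R M N m : Type*} [CommRing R] [AddCommGroup M] [Module R M] [AddCommGroup N] [Module R N]
  [Fintype m] [DecidableEq m]

theorem alternatingMap_sum_smul_eq_det_smul (f : M [⋀^m]→ₗ[R] N) (A : Matrix m m R) (y : m → M) :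
    f (fun a => ∑ b, A a b • y b) = A.det • f y := by
  have h : f.compLinearMap (Fintype.linearCombination R y) =
      (LinearMap.toSpanSingleton R N (f y)).compAlternatingMap Matrix.detRowAlternating := by
    refine (Pi.basisFun R m).ext_alternating fun v hv => ?_
    obtain ⟨σ, rfl⟩ : ∃ σ : Equiv.Perm m, ⇑σ = v :=
      ⟨Equiv.ofBijective v hv.bijective_of_finite, rfl⟩
    have hbasis : (fun i => Pi.basisFun R m (σ i)) = Pi.basisFun R m ∘ σ := rfl
    have hdet : Matrix.detRowAlternating (Pi.basisFun R m) = (1 : R) := by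
      rw [← Pi.basisFun_det, Module.Basis.det_self]
    rw [hbasis, AlternatingMap.map_perm, AlternatingMap.map_perm]
    simp [hdet, Fintype.linearCombination_apply_single]
  exact DFunLike.congr_fun h A

end AlternatingMap

section BorderedMatrix

open Matrix

variable {R S m : Type*}

/-- The matrix `A` bordered by the column `u`, the row `v` and the corner entry `d`; the new row and
column are indexed by `Unit`. -/
def borderedMatrix (A : Matrix m m R) (u v : m → R) (d : R) : Matrix (m ⊕ Unit) (m ⊕ Unit) R :=
  fromBlocks A (replicateCol Unit u) (replicateRow Unit v) (of fun _ _ => d)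

theorem borderedMatrix_map (f : R → S) (A : Matrix m m R) (u v : m → R) (d : R) :
    (borderedMatrix A u v d).map f = borderedMatrix (A.map f) (f ∘ u) (f ∘ v) (f d) :=
  fromBlocks_map _ _ _ _ _

variable [CommRing R] [CommRing S] [Fintype m] [DecidableEq m]

theorem map_dotProduct_adjugate_mulVec (f : R →+* S) (A : Matrix m m R) (u v : m → R) :
    f (v ⬝ᵥ A.adjugate *ᵥ u) = (f ∘ v) ⬝ᵥ (A.map f).adjugate *ᵥ (f ∘ u) := by
  have hmulVec : f ∘ (A.adjugate *ᵥ u) = (A.map f).adjugate *ᵥ (f ∘ u) := by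
    ext i
    rw [Function.comp_apply, RingHom.map_mulVec, ← RingHom.mapMatrix_apply, RingHom.map_adjugate,
      RingHom.mapMatrix_apply]
  rw [RingHom.map_dotProduct, hmulVec]

theorem det_mul_det_borderedMatrix (A : Matrix m m R) (u v : m → R) (d : R) :
    A.det * (borderedMatrix A u v d).det = A.det * (A.det * d - v ⬝ᵥ A.adjugate *ᵥ u) := by
  have hmul : borderedMatrix A u v d *
      fromBlocks 1 (-replicateCol Unit (A.adjugate *ᵥ u)) 0 (of fun _ _ => A.det) =
      fromBlocks A 0 (replicateRow Unit v) (of fun _ _ => A.det * d - v ⬝ᵥ A.adjugate *ᵥ u) := by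
    have hcol : A *ᵥ A.adjugate *ᵥ u = A.det • u := by
      rw [mulVec_mulVec, mul_adjugate, smul_mulVec, one_mulVec]
    rw [borderedMatrix, fromBlocks_multiply]
    congr 1
    · simp
    · rw [Matrix.mul_neg, ← replicateCol_mulVec, hcol]
      ext i j
      simp [mul_apply, mul_comm]
    · simp
    · ext i j
      simp only [Matrix.mul_neg, Matrix.add_apply, Matrix.neg_apply, mul_apply, replicateRow_apply,
        replicateCol_apply, Finset.univ_unique, PUnit.default_eq_unit, of_apply, Finset.sum_const,
        Finset.card_singleton, one_smul, dotProduct]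
      ring
  have hdet := congrArg det hmul
  rw [det_mul, det_fromBlocks_zero₂₁, det_fromBlocks_zero₁₂] at hdet
  simpa [mul_comm] using hdet

theorem det_borderedMatrix (A : Matrix m m R) (u v : m → R) (d : R) :
    (borderedMatrix A u v d).det = A.det * d - v ⬝ᵥ A.adjugate *ᵥ u := by
  -- `det A` may be a zero divisor, but over `R[X]` the determinant of `X + A` is monic.
  let f : Polynomial R →+* R := Polynomial.evalRingHom 0
  let B : Matrix m m (Polynomial R) := charmatrix (-A)
  have hB : IsRegular B.det := (charpoly_monic (-A)).isRegular
  have hdet := congrArg f (hB.left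
    (det_mul_det_borderedMatrix B (Polynomial.C ∘ u) (Polynomial.C ∘ v) (Polynomial.C d)))
  have hA : B.map f = A := by
    ext i j
    by_cases hij : i = j <;> simp [f, B, hij]
  have hC (w : m → R) : f ∘ Polynomial.C ∘ w = w := funext fun _ => Polynomial.eval_C
  have hd : f (Polynomial.C d) = d := Polynomial.eval_C
  rwa [RingHom.map_det, RingHom.mapMatrix_apply, borderedMatrix_map, map_sub, map_mul,
    RingHom.map_det, RingHom.mapMatrix_apply, map_dotProduct_adjugate_mulVec, hA, hC, hC, hd]
    at hdet

end BorderedMatrix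

section CentralWedge

variable {R M m J : Type*} [CommRing R] [AddCommGroup M] [Module R M]

theorem ι_mul_ι_eq_neg (x y : M) : ι R x * ι R y = -(ι R y * ι R x) :=
  eq_neg_of_add_eq_zero_left (ι_add_mul_swap x y)

theorem ι_mul_ι_mem_center (x y : M) :
    ι R x * ι R y ∈ Subalgebra.center R (ExteriorAlgebra R M) := by
  rw [Subalgebra.mem_center_iff]
  intro b
  induction b using ExteriorAlgebra.induction with
  | algebraMap r => exact Algebra.commutes r _
  | ι z =>
    rw [← mul_assoc, ι_mul_ι_eq_neg z x, neg_mul, mul_assoc, ι_mul_ι_eq_neg z y, mul_neg, neg_neg,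
      mul_assoc]
  | mul a b ha hb => rw [mul_assoc, hb, ← mul_assoc, ha, mul_assoc]
  | add a b ha hb => rw [add_mul, mul_add, ha, hb]

variable (R) in
/-- The wedge product `x ∧ y` of two vectors as a bilinear map into the centre of the exterior
algebra. Taking values in the centre gives access to `Finset.prod` and the determinant calculus over
commutative rings. -/
def centralWedge : M →ₗ[R] M →ₗ[R] Subalgebra.center R (ExteriorAlgebra R M) :=
  LinearMap.mk₂ R (fun x y => ⟨ι R x * ι R y, ι_mul_ι_mem_center x y⟩)
    (fun _ _ _ => Subtype.ext (by simp [add_mul])) (fun _ _ _ => Subtype.ext (by simp))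
    (fun _ _ _ => Subtype.ext (by simp [mul_add])) (fun _ _ _ => Subtype.ext (by simp))

theorem coe_centralWedge (x y : M) :
    (centralWedge R x y : ExteriorAlgebra R M) = ι R x * ι R y := rfl

theorem coe_prod_centralWedge [DecidableEq m] (x y : m → M) {l : List m} (hl : l.Nodup) :
    ((∏ i ∈ l.toFinset, centralWedge R (x i) (y i) : Subalgebra.center R (ExteriorAlgebra R M)) :
      ExteriorAlgebra R M) = (l.map fun i => ι R (x i) * ι R (y i)).prod := by
  rw [List.prod_toFinset _ hl, ← Subalgebra.coe_val, map_list_prod, List.map_map]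
  rfl

theorem centralWedge_mul_centralWedge_same_left (x y z : M) :
    centralWedge R x y * centralWedge R x z = 0 := by
  apply Subtype.ext
  have hcomm := Subalgebra.mem_center_iff.1 (ι_mul_ι_mem_center (R := R) x y) (ι R x)
  simp [coe_centralWedge, ← mul_assoc, ← hcomm]

theorem centralWedge_mul_centralWedge_same_right (x y z : M) :
    centralWedge R x z * centralWedge R y z = 0 := by
  apply Subtype.ext
  have hcomm := Subalgebra.mem_center_iff.1 (ι_mul_ι_mem_center (R := R) y z) (ι R z)
  simp [coe_centralWedge, mul_assoc, hcomm]

theorem prod_centralWedge_mul_same_left {s : Finset m} {a : m} (ha : a ∈ s) (x y : m → M) (z : M) :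
    (∏ i ∈ s, centralWedge R (x i) (y i)) * centralWedge R (x a) z = 0 := by
  obtain ⟨c, hc⟩ := Finset.dvd_prod_of_mem (fun i => centralWedge R (x i) (y i)) ha
  rw [hc, mul_right_comm, centralWedge_mul_centralWedge_same_left, zero_mul]

theorem prod_centralWedge_mul_same_right {s : Finset m} {a : m} (ha : a ∈ s) (x y : m → M) (z : M) :
    (∏ i ∈ s, centralWedge R (x i) (y i)) * centralWedge R z (y a) = 0 := by
  obtain ⟨c, hc⟩ := Finset.dvd_prod_of_mem (fun i => centralWedge R (x i) (y i)) ha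
  rw [hc, mul_right_comm, centralWedge_mul_centralWedge_same_right, zero_mul]

variable [Fintype m]

variable (R) in
/-- The product `∏ i, x i ∧ y i` as an alternating map of the family `y`. -/
def prodCentralWedge (x : m → M) : M [⋀^m]→ₗ[R] Subalgebra.center R (ExteriorAlgebra R M) where
  __ := (MultilinearMap.mkPiAlgebra R m _).compLinearMap fun i => centralWedge R (x i)
  map_eq_zero_of_eq' y i j hij hne := by
    classical
    change ∏ k, centralWedge R (x k) (y k) = 0
    rw [← Finset.prod_erase_mul _ _ (Finset.mem_univ j), ← hij]
    exact prod_centralWedge_mul_same_right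
      (Finset.mem_erase.2 ⟨hne, Finset.mem_univ i⟩) x y (x j)

theorem prodCentralWedge_apply (x y : m → M) :
    prodCentralWedge R x y = ∏ i, centralWedge R (x i) (y i) := rfl

theorem sum_borderedMatrix_smul_centralWedge (ψbar ψ : m → M) (α β : M) (K : Matrix m m R) :
    ∑ a, ∑ b, borderedMatrix K (-1) (-1) 0 a b •
        centralWedge R (Sum.elim ψbar (fun _ => α) a) (Sum.elim ψ (fun _ => β) b) =
      (∑ i, ∑ j, K i j • centralWedge R (ψbar i) (ψ j)) - (∑ i, centralWedge R α (ψ i)) -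
        ∑ i, centralWedge R (ψbar i) β := by
  simp only [borderedMatrix, Fintype.sum_sum_type, Matrix.fromBlocks_apply₁₁,
    Matrix.fromBlocks_apply₁₂, Matrix.fromBlocks_apply₂₁, Matrix.fromBlocks_apply₂₂,
    Matrix.replicateCol_apply, Matrix.replicateRow_apply, Matrix.of_apply, Sum.elim_inl,
    Sum.elim_inr, Finset.univ_unique, Finset.sum_singleton, Finset.sum_add_distrib, Pi.neg_apply,
    Pi.one_apply, neg_smul, one_smul, zero_smul, Finset.sum_neg_distrib, add_zero]
  abel

variable [DecidableEq m]

theorem sum_smul_centralWedge_pow_card (x y : m → M) (A : Matrix m m R) :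
    (∑ a, ∑ b, A a b • centralWedge R (x a) (y b)) ^ Fintype.card m =
      (((Fintype.card m).factorial : R) * A.det) • ∏ i, centralWedge R (x i) (y i) := by
  have hrow : ∀ a, ∑ b, A a b • centralWedge R (x a) (y b) =
      centralWedge R (x a) (∑ b, A a b • y b) := fun a => by simp only [map_sum, map_smul]
  simp only [hrow]
  rw [← Finset.card_univ, sum_pow_card_of_mul_self_eq_zero
      (fun _ _ => centralWedge_mul_centralWedge_same_left _ _ _),
    ← prodCentralWedge_apply, alternatingMap_sum_smul_eq_det_smul, prodCentralWedge_apply, mul_smul,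
    ← nsmul_eq_mul, Nat.cast_smul_eq_nsmul]

variable [Fintype J]

theorem prod_compl_centralWedge_mul_sum_smul (x y : m → M) (A : Matrix m m R) (e : J ↪ m) :
    (∏ i ∈ (Finset.univ.map e)ᶜ, centralWedge R (x i) (y i)) *
        ∑ a, ∑ b, A a b • centralWedge R (x a) (y b) =
      (∏ i ∈ (Finset.univ.map e)ᶜ, centralWedge R (x i) (y i)) *
        ∑ c, ∑ d, A.submatrix e e c d • centralWedge R (x (e c)) (y (e d)) := by
  have hmem : ∀ a ∉ Set.range e, a ∈ (Finset.univ.map e)ᶜ := fun a ha => by simpa using ha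
  simp only [Finset.mul_sum, mul_smul_comm]
  symm
  refine Fintype.sum_of_injective e e.injective _ _ (fun a ha => ?_) fun c => ?_
  · refine Finset.sum_eq_zero fun b _ => ?_
    rw [prod_centralWedge_mul_same_left (hmem a ha), smul_zero]
  · refine Fintype.sum_of_injective e e.injective _ _ (fun b hb => ?_) fun d => rfl
    rw [prod_centralWedge_mul_same_right (hmem b hb), smul_zero]

variable [DecidableEq J]

theorem sum_smul_centralWedge_pow_card_mul_prod_compl (x y : m → M) (A : Matrix m m R)
    (e : J ↪ m) :
    (∑ a, ∑ b, A a b • centralWedge R (x a) (y b)) ^ Fintype.card J *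
        ∏ i ∈ (Finset.univ.map e)ᶜ, centralWedge R (x i) (y i) =
      (((Fintype.card J).factorial : R) * (A.submatrix e e).det) •
        ∏ i, centralWedge R (x i) (y i) := by
  have hsemiconj : SemiconjBy (∏ i ∈ (Finset.univ.map e)ᶜ, centralWedge R (x i) (y i))
      (∑ a, ∑ b, A a b • centralWedge R (x a) (y b))
      (∑ c, ∑ d, A.submatrix e e c d • centralWedge R (x (e c)) (y (e d))) :=
    (prod_compl_centralWedge_mul_sum_smul x y A e).trans (mul_comm _ _)
  rw [mul_comm, (hsemiconj.pow_right _).eq,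
    sum_smul_centralWedge_pow_card (fun c => x (e c)) (fun c => y (e c)), smul_mul_assoc,
    ← Finset.prod_mul_prod_compl (Finset.univ.map e), Finset.prod_map]

theorem centralWedge_gaussian_pow_mul_prod (ψbar ψ : m → M) (α β : M)
    (K : Matrix m m R) (I : Finset m) :
    ((∑ i, ∑ j, K i j • centralWedge R (ψbar i) (ψ j)) - (∑ i, centralWedge R α (ψ i)) -
          ∑ i, centralWedge R (ψbar i) β) ^ (Iᶜ.card + 1) *
        ∏ i ∈ I, centralWedge R (ψbar i) (ψ i) =
      -((((Iᶜ.card + 1).factorial : R) * ∑ a, ∑ b,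
          (K.submatrix (Subtype.val : ↥Iᶜ → m) Subtype.val).adjugate a b) •
        ((∏ i, centralWedge R (ψbar i) (ψ i)) * centralWedge R α β)) := by
  let e : ↥Iᶜ ⊕ Unit ↪ m ⊕ Unit := (Function.Embedding.subtype (· ∈ Iᶜ)).sumMap (.refl Unit)
  have hcard : Fintype.card (↥Iᶜ ⊕ Unit) = Iᶜ.card + 1 := by
    rw [Fintype.card_sum, Fintype.card_coe, Fintype.card_unit]
  have hcompl : (Finset.univ.map e)ᶜ = I.map .inl := by
    ext (i | i) <;> simp [e]
  have hsub : (borderedMatrix K (-1) (-1) 0).submatrix e e =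
      borderedMatrix (K.submatrix Subtype.val Subtype.val) (-1) (-1) 0 := by
    ext (i | i) (j | j) <;> rfl
  have hdot (B : Matrix ↥Iᶜ ↥Iᶜ R) : dotProduct (-1) (B.mulVec (-1)) = ∑ a, ∑ b, B a b := by
    simp [dotProduct, Matrix.mulVec]
  have h := sum_smul_centralWedge_pow_card_mul_prod_compl (Sum.elim ψbar fun _ => α)
    (Sum.elim ψ fun _ => β) (borderedMatrix K (-1) (-1) 0) e
  rw [sum_borderedMatrix_smul_centralWedge, hcard, hcompl, hsub,
    det_borderedMatrix, hdot, mul_zero, zero_sub, mul_neg, neg_smul] at h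
  simpa using h

theorem grassmann_gaussian_with_sources_and_insertions_general (ψbar ψ : m → M) (α β : M)
    (K : Matrix m m R) (I : Finset m) {s l : List m} (hs : s.Nodup) (hsI : s.toFinset = I)
    (hl : l.Nodup) (hluniv : l.toFinset = Finset.univ) :
    ((∑ i, ∑ j, K i j • (ι R (ψbar i) * ι R (ψ j))) - (∑ i, ι R α * ι R (ψ i)) -
          ∑ i, ι R (ψbar i) * ι R β) ^ (Iᶜ.card + 1) *
        (s.map fun i => ι R (ψbar i) * ι R (ψ i)).prod =
      -((((Iᶜ.card + 1).factorial : R) * ∑ a, ∑ b,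
          (K.submatrix (Subtype.val : ↥Iᶜ → m) Subtype.val).adjugate a b) •
        ((l.map fun i => ι R (ψbar i) * ι R (ψ i)).prod * ι R α * ι R β)) := by
  have hprod := coe_prod_centralWedge (R := R) ψbar ψ hs
  have hprod_univ := coe_prod_centralWedge (R := R) ψbar ψ hl
  rw [hsI] at hprod
  rw [hluniv] at hprod_univ
  have hcentral := congrArg (Subalgebra.center R (ExteriorAlgebra R M)).val
    (centralWedge_gaussian_pow_mul_prod ψbar ψ α β K I)
  simpa [hprod, hprod_univ, coe_centralWedge, mul_assoc] using hcentral

end CentralWedge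

theorem grassmann_gaussian_with_sources_and_insertions (n : ℕ) (hn : 1 ≤ n)
    (K : Matrix (Fin n) (Fin n) ℝ) (I : Finset (Fin n)) :
    let ψ : Fin n → ExteriorAlgebra ℝ (Fin (2 * n + 2) → ℝ) :=
      fun i => ι ℝ (Pi.single (⟨i.val, by have := i.2; omega⟩ : Fin (2 * n + 2)) (1 : ℝ))
    let ψbar : Fin n → ExteriorAlgebra ℝ (Fin (2 * n + 2) → ℝ) :=
      fun i => ι ℝ (Pi.single (⟨n + i.val, by have := i.2; omega⟩ : Fin (2 * n + 2)) (1 : ℝ))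
    let α : ExteriorAlgebra ℝ (Fin (2 * n + 2) → ℝ) :=
      ι ℝ (Pi.single (⟨2 * n, by omega⟩ : Fin (2 * n + 2)) (1 : ℝ))
    let β : ExteriorAlgebra ℝ (Fin (2 * n + 2) → ℝ) :=
      ι ℝ (Pi.single (⟨2 * n + 1, by omega⟩ : Fin (2 * n + 2)) (1 : ℝ))
    let S : ExteriorAlgebra ℝ (Fin (2 * n + 2) → ℝ) :=
      (∑ i : Fin n, ∑ j : Fin n, K i j • (ψbar i * ψ j))
        - (∑ i : Fin n, α * ψ i) - ∑ i : Fin n, ψbar i * β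
    let Ω : ExteriorAlgebra ℝ (Fin (2 * n + 2) → ℝ) :=
      ((List.finRange n).map fun i => ψbar i * ψ i).prod
    -- the product ∧_{i ∈ I} (ψ̄_i ∧ ψ_i), taken in increasing order of i
    let prodI : ExteriorAlgebra ℝ (Fin (2 * n + 2) → ℝ) :=
      (((List.finRange n).filter fun i => decide (i ∈ I)).map fun i => ψbar i * ψ i).prod
    -- the principal submatrix K_{Iᶜ} on the complement of I
    let KIc : Matrix ↥(Iᶜ) ↥(Iᶜ) ℝ :=
      K.submatrix (fun x : ↥(Iᶜ) => (x : Fin n)) fun x : ↥(Iᶜ) => (x : Fin n)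
    S ^ (n - I.card + 1) * prodI
      = -((((n - I.card + 1).factorial : ℝ) * ∑ a, ∑ b, KIc.adjugate a b)
          • (Ω * α * β)) := by
  have hI : ((List.finRange n).filter fun i => decide (i ∈ I)).toFinset = I := by ext; simp
  simpa only [Finset.card_compl, Fintype.card_fin] using
    grassmann_gaussian_with_sources_and_insertions_general (M := Fin (2 * n + 2) → ℝ)
      (fun i => Pi.single ⟨n + i.val, by omega⟩ 1) (fun i => Pi.single ⟨i.val, by omega⟩ 1)
      (Pi.single ⟨2 * n, by omega⟩ 1) (Pi.single ⟨2 * n + 1, by omega⟩ 1) K I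
      ((List.nodup_finRange n).filter _) hI (List.nodup_finRange n) (List.toFinset_finRange n)
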